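/- Call a cube Q with 0 < ℓ(Q) < ∞ a transit cube. For x ∈ supp(μ) and a cube Q containing x, set δ(x,Q) := ∫_{Q_x ∖ {x}} |y−x|^{-n} dμ(y), where Q_x is the smallest cube centered at x containing Q; and for a cube Q set δ(Q, ℝ^d) := ∫_{ℝ^d ∖ Q} |y−z_Q|^{-n} dμ(y). Then: (i) if δ(x,Q) < ∞ for some transit cube Q containing x, then δ(x,Q') < ∞ for every transit cube Q' containing x; and (ii) if δ(Q, ℝ^d) < ∞ for some transit cube Q, then δ(Q', ℝ^d) < ∞ for every transit cube Q'. -/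

import Mathlib

open MeasureTheory Metric Set Filter
open scoped ENNReal NNReal

noncomputable section

/-- The ambient Euclidean space `ℝ^d`. -/
abbrev Euc (d : ℕ) := EuclideanSpace ℝ (Fin d)

/-- A closed axis-parallel cube in `ℝ^d`, given by its center and side length. -/
structure Cube (d : ℕ) where
  center : Euc d
  side : ℝ

namespace Cube

variable {d : ℕ}

/-- The set of points of the cube. -/
def toSet (Q : Cube d) : Set (Euc d) := {x | ∀ i, |x i - Q.center i| ≤ Q.side / 2}

/-- The concentric dilation `ρQ`. -/
def dilate (Q : Cube d) (ρ : ℝ) : Cube d := ⟨Q.center, ρ * Q.side⟩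

/-- `Q.encl R` is the smallest cube concentric with `Q` containing `Q ∪ R`
(denoted `Q_R` in the paper). -/
def encl (Q R : Cube d) : Cube d :=
  ⟨Q.center, max Q.side (⨆ i, 2 * |R.center i - Q.center i| + R.side)⟩

end Cube

variable {d : ℕ}

/-- The support of a measure: the points all of whose neighbourhoods have positive
measure. -/
def msupport (μ : Measure (Euc d)) : Set (Euc d) := {x | ∀ r > 0, 0 < μ (ball x r)}

/-- A cube of the lattice: positive side length and centered at a point of `supp μ`. -/
def IsCube (μ : Measure (Euc d)) (Q : Cube d) : Prop :=
  Q.center ∈ msupport μ ∧ 0 < Q.side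

/-- The growth condition `μ(B(x,r)) ≤ C₀ rⁿ` for all `x ∈ supp μ`, `r > 0`. -/
def GrowthCond (μ : Measure (Euc d)) (C₀ n : ℝ) : Prop :=
  ∀ x ∈ msupport μ, ∀ r : ℝ, 0 < r → μ (ball x r) ≤ ENNReal.ofReal (C₀ * r ^ n)

/-- The coefficient `δ(Q,R)`. -/
def cdelta (μ : Measure (Euc d)) (n : ℝ) (Q R : Cube d) : ℝ :=
  max (∫ x in (Q.encl R).toSet \ Q.toSet, ‖x - Q.center‖ ^ (-n) ∂μ)
      (∫ x in (R.encl Q).toSet \ R.toSet, ‖x - R.center‖ ^ (-n) ∂μ)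

/-- An `(α,β)`-doubling cube: `μ(αQ) ≤ β μ(Q)`. -/
def IsDoublingWith (μ : Measure (Euc d)) (α β : ℝ) (Q : Cube d) : Prop :=
  μ (Q.dilate α).toSet ≤ ENNReal.ofReal β * μ Q.toSet

/-- A `(2,2^(d+1))`-doubling cube. -/
def IsDoubling (μ : Measure (Euc d)) (Q : Cube d) : Prop :=
  μ (Q.dilate 2).toSet ≤ 2 ^ (d + 1) * μ Q.toSet

/-- An `n`-dimensional Calderón–Zygmund kernel with size constant `C₁`,
regularity constant `C₂` and regularity exponent `δ`. -/
structure IsCZKernel (d : ℕ) (n C₁ C₂ δ : ℝ) (k : Euc d → Euc d → ℝ) : Prop where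
  measurable : Measurable (Function.uncurry k)
  size : ∀ x y, x ≠ y → |k x y| ≤ C₁ / ‖x - y‖ ^ n
  reg : ∀ x x' y : Euc d, ‖x - x'‖ ≤ ‖x - y‖ / 2 →
    |k x y - k x' y| + |k y x - k y x'| ≤ C₂ * ‖x - x'‖ ^ δ / ‖x - y‖ ^ (n + δ)

/-- The truncated operator `T_ε`. -/
def trunc (μ : Measure (Euc d)) (k : Euc d → Euc d → ℝ) (ε : ℝ) (f : Euc d → ℝ)
    (x : Euc d) : ℝ :=
  ∫ y in {y | ε < dist x y}, k x y * f y ∂μ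

/-- `T_ε χ_Q`, the truncated operator applied to the characteristic function of a
cube `Q`. -/
def truncCube (μ : Measure (Euc d)) (k : Euc d → Euc d → ℝ) (ε : ℝ) (Q : Cube d)
    (x : Euc d) : ℝ :=
  ∫ y in {y | ε < dist x y} ∩ Q.toSet, k x y ∂μ

/-- The function representing `T_ε(1)` modulo additive constants, relative to a
base point `x₀`. -/
def truncOne (μ : Measure (Euc d)) (k : Euc d → Euc d → ℝ) (x₀ : Euc d) (ε : ℝ)
    (x : Euc d) : ℝ :=
  ∫ y, ({y | ε < dist x y}.indicator (fun z => k x z) y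
      - {y | ε < dist x₀ y}.indicator (fun z => k x₀ z) y) ∂μ

/-- `f ∈ BMO_ρ(μ)` with constant `C`. -/
def BMOWith (μ : Measure (Euc d)) (ρ C : ℝ) (f : Euc d → ℝ) : Prop :=
  ∀ Q : Cube d, IsCube μ Q →
    ∫ x in Q.toSet, |f x - ⨍ y in Q.toSet, f y ∂μ| ∂μ ≤ C * (μ (Q.dilate ρ).toSet).toReal

/-- `f ∈ RBMO(μ)` with constant `C`. -/
def RBMOWith (μ : Measure (Euc d)) (n C : ℝ) (f : Euc d → ℝ) : Prop :=
  (∀ Q : Cube d, IsCube μ Q → IsDoubling μ Q →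
    ∫ x in Q.toSet, |f x - ⨍ y in Q.toSet, f y ∂μ| ∂μ ≤ C * (μ Q.toSet).toReal) ∧
  (∀ Q R : Cube d, IsCube μ Q → IsCube μ R → IsDoubling μ Q → IsDoubling μ R →
    Q.toSet ⊆ R.toSet →
    |(⨍ x in Q.toSet, f x ∂μ) - ⨍ x in R.toSet, f x ∂μ| ≤ C * (1 + cdelta μ n Q R))

/-- The distance between two sets. -/
def setDist (s t : Set (Euc d)) : ℝ := sInf (Set.image2 dist s t)

/-- `δ(x, R)` for a point `x`, defined through the smallest cube centered at `x`
containing `R`; with values in `[0,∞]`. -/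
def deltaPt (μ : Measure (Euc d)) (n : ℝ) (x : Euc d) (R : Cube d) : ℝ≥0∞ :=
  ∫⁻ y in ((Cube.mk x 0).encl R).toSet \ {x}, ENNReal.ofReal (‖y - x‖ ^ (-n)) ∂μ

/-- `δ(Q, ℝ^d)`, with values in `[0,∞]`. -/
def deltaFull (μ : Measure (Euc d)) (n : ℝ) (Q : Cube d) : ℝ≥0∞ :=
  ∫⁻ x in Q.toSetᶜ, ENNReal.ofReal (‖x - Q.center‖ ^ (-n)) ∂μ

/-- The integral operator with kernel `s`. -/
def Sop (μ : Measure (Euc d)) (s : Euc d → Euc d → ℝ) (f : Euc d → ℝ) (x : Euc d) : ℝ :=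
  ∫ y, s x y * f y ∂μ

/-- The difference operators `D_k = S_k - S_{k-1}`. -/
def Dop (μ : Measure (Euc d)) (s : ℤ → Euc d → Euc d → ℝ) (j : ℤ) (f : Euc d → ℝ) :
    Euc d → ℝ :=
  fun x => Sop μ (s j) f x - Sop μ (s (j - 1)) f x

/-!
Finiteness of `δ(x, Q)` says exactly that `|y - x|⁻ⁿ` is integrable on some punctured neighbourhood
of `x`, and finiteness of `δ(Q, ℝᵈ)` that `|y - z_Q|⁻ⁿ` is integrable near infinity: what remains of
the domain of integration lies in a compact set avoiding the singularity. The first condition does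
not mention `Q`; the second does not depend on `z_Q`, since `|y - z| ≍ |y|` as `y → ∞`.
-/

open Topology Bornology Asymptotics

theorem integrableOn_iff_integrableAtFilter {α E : Type*} [MeasurableSpace α]
    [NormedAddCommGroup E] {μ : Measure α} {f : α → E} {l : Filter α} {s : Set α} (hs : s ∈ l)
    (hdiff : ∀ t ∈ l, IntegrableOn f (s \ t) μ) :
    IntegrableOn f s μ ↔ IntegrableAtFilter f l μ := by
  refine ⟨fun h => ⟨s, hs, h⟩, fun ⟨t, ht, hft⟩ => ?_⟩
  rw [← inter_union_sdiff s t]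
  exact (hft.mono_set inter_subset_right).union (hdiff t ht)

section PointSingularity

variable {X E : Type*} [TopologicalSpace X] [T2Space X] [MeasurableSpace X]
  [OpensMeasurableSpace X] [NormedAddCommGroup E] {μ : Measure X} [IsFiniteMeasureOnCompacts μ]
  {f : X → E} {x : X} {K : Set X}

theorem integrableOn_compact_diff_of_mem_nhds (hf : ContinuousOn f {x}ᶜ) (hK : IsCompact K)
    {U : Set X} (hU : U ∈ 𝓝 x) : IntegrableOn f (K \ U) μ := by
  have hx : K \ interior U ⊆ {x}ᶜ := fun y hy hyx =>
    hy.2 (by rwa [mem_singleton_iff.1 hyx, mem_interior_iff_mem_nhds])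
  exact ((hf.mono hx).integrableOn_compact (hK.diff isOpen_interior)).mono_set
    (sdiff_subset_sdiff_right interior_subset)

theorem integrableOn_compact_diff_singleton_iff (hf : ContinuousOn f {x}ᶜ) (hK : IsCompact K)
    (hxK : K ∈ 𝓝 x) : IntegrableOn f (K \ {x}) μ ↔ IntegrableAtFilter f (𝓝[≠] x) μ := by
  refine integrableOn_iff_integrableAtFilter (sdiff_mem_nhdsWithin_compl hxK {x}) fun t ht => ?_
  rw [sdiff_sdiff, singleton_union]
  exact integrableOn_compact_diff_of_mem_nhds hf hK (insert_mem_nhds_iff.2 ht)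

theorem integrableOn_compl_compact_iff (hf : ContinuousOn f {x}ᶜ) (hK : IsCompact K)
    (hxK : K ∈ 𝓝 x) : IntegrableOn f Kᶜ μ ↔ IntegrableAtFilter f (cocompact X) μ := by
  refine integrableOn_iff_integrableAtFilter hK.compl_mem_cocompact fun t ht => ?_
  obtain ⟨L, hL, hLt⟩ := mem_cocompact.1 ht
  exact (integrableOn_compact_diff_of_mem_nhds hf hL hxK).mono_set fun y hy =>
    ⟨compl_subset_comm.1 hLt hy.2, hy.1⟩

end PointSingularity

section NormSubRpow

variable {E : Type*} [NormedAddCommGroup E]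

theorem continuousOn_norm_sub_rpow (z : E) (r : ℝ) :
    ContinuousOn (fun y => ‖y - z‖ ^ r) {z}ᶜ :=
  (by fun_prop : Continuous fun y => ‖y - z‖).continuousOn.rpow_const fun _ hy =>
    Or.inl (norm_ne_zero_iff.2 (sub_ne_zero.2 hy))

theorem isTheta_sub_const_cobounded (z : E) : (fun y => y - z) =Θ[cobounded E] id :=
  (IsEquivalent.refl.sub_isLittleO (isLittleO_const_id_cobounded z)).isTheta

theorem isTheta_norm_sub_rpow_cobounded (z w : E) (r : ℝ) :
    (fun y => ‖y - z‖ ^ r) =Θ[cobounded E] fun y => ‖y - w‖ ^ r :=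
  IsTheta.rpow (.of_forall fun _ => norm_nonneg _) (.of_forall fun _ => norm_nonneg _)
    ((isTheta_sub_const_cobounded z).norm_left.trans
      (isTheta_sub_const_cobounded w).norm_left.symm)

variable [MeasurableSpace E] [OpensMeasurableSpace E] {μ : Measure E}

theorem measurable_norm_sub_rpow (z : E) (r : ℝ) : Measurable fun y => ‖y - z‖ ^ r :=
  (by fun_prop : Continuous fun y => ‖y - z‖).measurable.pow_const r

theorem setLIntegral_norm_sub_rpow_lt_top_iff (z : E) (r : ℝ) (s : Set E) :
    ∫⁻ y in s, ENNReal.ofReal (‖y - z‖ ^ r) ∂μ < ⊤ ↔ IntegrableOn (fun y => ‖y - z‖ ^ r) s μ :=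
  lt_top_iff_ne_top.trans <| lintegral_ofReal_ne_top_iff_integrable
    (measurable_norm_sub_rpow z r).aestronglyMeasurable (.of_forall fun _ => by positivity)

theorem integrableAtFilter_norm_sub_rpow_cocompact_iff [ProperSpace E] (z w : E) (r : ℝ) :
    IntegrableAtFilter (fun y => ‖y - z‖ ^ r) (cocompact E) μ ↔
      IntegrableAtFilter (fun y => ‖y - w‖ ^ r) (cocompact E) μ := by
  have hΘ := isTheta_norm_sub_rpow_cobounded z w r
  rw [Metric.cobounded_eq_cocompact] at hΘ
  have hmeas (v : E) : StronglyMeasurableAtFilter (fun y => ‖y - v‖ ^ r) (cocompact E) μ :=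
    (measurable_norm_sub_rpow v r).stronglyMeasurable.stronglyMeasurableAtFilter
  exact ⟨hΘ.isBigO_symm.integrableAtFilter (hmeas w), hΘ.isBigO.integrableAtFilter (hmeas z)⟩

end NormSubRpow

namespace Cube

theorem toSet_eq_preimage_pi (Q : Cube d) :
    Q.toSet = PiLp.homeomorph 2 (fun _ : Fin d => ℝ) ⁻¹'
      univ.pi fun i => closedBall (Q.center i) (Q.side / 2) := by
  ext x
  simp only [mem_preimage, mem_univ_pi, mem_closedBall, Real.dist_eq]
  rfl

theorem isCompact_toSet (Q : Cube d) : IsCompact Q.toSet := by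
  rw [toSet_eq_preimage_pi, Homeomorph.isCompact_preimage]
  exact isCompact_univ_pi fun i => isCompact_closedBall _ _

theorem toSet_mem_nhds_center {Q : Cube d} (hQ : 0 < Q.side) : Q.toSet ∈ 𝓝 Q.center := by
  rw [toSet_eq_preimage_pi]
  exact (Homeomorph.continuous _).continuousAt.preimage_mem_nhds
    (set_pi_mem_nhds finite_univ fun i _ => closedBall_mem_nhds _ (half_pos hQ))

theorem encl_toSet_mem_nhds_center (Q : Cube d) {R : Cube d} (hR : 0 < R.side) :
    (Q.encl R).toSet ∈ 𝓝 Q.center := by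
  have hside (i : Fin d) : R.side ≤ (Q.encl R).side :=
    calc R.side ≤ 2 * |R.center i - Q.center i| + R.side := le_add_of_nonneg_left (by positivity)
      _ ≤ ⨆ j, 2 * |R.center j - Q.center j| + R.side :=
        le_ciSup (f := fun j => 2 * |R.center j - Q.center j| + R.side)
          (finite_range _).bddAbove i
      _ ≤ (Q.encl R).side := le_max_right _ _
  refine mem_of_superset (toSet_mem_nhds_center (Q := ⟨Q.center, R.side⟩) hR) fun y hy i => ?_
  exact (hy i).trans (div_le_div_of_nonneg_right (hside i) zero_le_two)

end Cube

section Coefficients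

variable {μ : Measure (Euc d)} [IsLocallyFiniteMeasure μ] {Q : Cube d}

theorem deltaPt_lt_top_iff (n : ℝ) (x : Euc d) (hQ : 0 < Q.side) :
    deltaPt μ n x Q < ⊤ ↔ IntegrableAtFilter (fun y => ‖y - x‖ ^ (-n)) (𝓝[≠] x) μ :=
  (setLIntegral_norm_sub_rpow_lt_top_iff x (-n) _).trans <|
    integrableOn_compact_diff_singleton_iff (continuousOn_norm_sub_rpow x (-n))
      (Cube.isCompact_toSet _) (Cube.encl_toSet_mem_nhds_center ⟨x, 0⟩ hQ)

theorem deltaFull_lt_top_iff (n : ℝ) (hQ : 0 < Q.side) :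
    deltaFull μ n Q < ⊤ ↔
      IntegrableAtFilter (fun y => ‖y - Q.center‖ ^ (-n)) (cocompact (Euc d)) μ :=
  (setLIntegral_norm_sub_rpow_lt_top_iff Q.center (-n) _).trans <|
    integrableOn_compl_compact_iff (continuousOn_norm_sub_rpow Q.center (-n))
      Q.isCompact_toSet (Cube.toSet_mem_nhds_center hQ)

end Coefficients

theorem stopping_and_initial_independent_of_cube_general (n : ℝ) (μ : Measure (Euc d))
    [IsLocallyFiniteMeasure μ] {Q Q' : Cube d} (hQ : 0 < Q.side) (hQ' : 0 < Q'.side) :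
    (∀ x, deltaPt μ n x Q < ⊤ ↔ deltaPt μ n x Q' < ⊤) ∧
      (deltaFull μ n Q < ⊤ ↔ deltaFull μ n Q' < ⊤) := by
  refine ⟨fun x => ?_, ?_⟩
  · rw [deltaPt_lt_top_iff n x hQ, deltaPt_lt_top_iff n x hQ']
  · rw [deltaFull_lt_top_iff n hQ, deltaFull_lt_top_iff n hQ']
    exact integrableAtFilter_norm_sub_rpow_cocompact_iff Q.center Q'.center (-n)

/-- Finiteness of `δ(x,Q)` (resp. `δ(Q,ℝ^d)`) does not depend on the chosen transit
cube: (i) if `δ(x,Q) < ∞` for some transit cube `Q ∋ x` then `δ(x,Q') < ∞` for every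
transit cube `Q' ∋ x`; (ii) if `δ(Q,ℝ^d) < ∞` for some transit cube `Q` then
`δ(Q',ℝ^d) < ∞` for every transit cube `Q'`. -/
theorem stopping_and_initial_independent_of_cube {d : ℕ} (n C₀ : ℝ)
    (hn : 0 < n) (hnd : n ≤ d)
    (μ : Measure (Euc d)) [IsLocallyFiniteMeasure μ] (hμ : GrowthCond μ C₀ n) :
    (∀ x ∈ msupport μ, ∀ Q Q' : Cube d, IsCube μ Q → IsCube μ Q' →
      x ∈ Q.toSet → x ∈ Q'.toSet →
      deltaPt μ n x Q < ⊤ → deltaPt μ n x Q' < ⊤) ∧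
    (∀ Q Q' : Cube d, IsCube μ Q → IsCube μ Q' →
      deltaFull μ n Q < ⊤ → deltaFull μ n Q' < ⊤) :=
  ⟨fun x _ _ _ hQ hQ' _ _ =>
      ((stopping_and_initial_independent_of_cube_general n μ hQ.2 hQ'.2).1 x).1,
    fun _ _ hQ hQ' => (stopping_and_initial_independent_of_cube_general n μ hQ.2 hQ'.2).2.1⟩
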